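/- arXiv:1111.6007 — 2 statements merged into one kernel-verified Lean document; each statement's English description precedes it below -/
import Mathlib

section
/- Let r ≥ 3 be an integer. For every nonempty finite simple r-regular graph G, the point (d₃(G), d₄(G)) lies in the convex polygon Q^r ⊂ ℝ², where Q^r is the convex hull of the points P^r_0 = (0, r(r−1)²/8) and, for l = 1, …, r, P^r_l = ( (1/3)·∑_{i=1}^{l} C(r_i^{(l)}, 2), (1/4)·∑_{i=1}^{l} r_i^{(l)}·C(r_i^{(l)} − 1, 2) ), with r_i^{(l)} = ⌊(r+i−1)/l⌋ for i = 1, …, l. -/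
open SimpleGraph

/-- The number of `k`-cycle subgraphs of `G`: each `k`-cycle subgraph corresponds to exactly
`2 * k` rooted closed walks that are cycles of length `k`. -/
noncomputable def cycleCount {V : Type*} (G : SimpleGraph V) (k : ℕ) : ℕ :=
  Nat.card ((x : V) × {p : G.Walk x x // p.IsCycle ∧ p.length = k}) / (2 * k)

/-- The density of `k`-cycles: the number of `k`-cycles divided by the number of vertices. -/
noncomputable def cycleDensity {V : Type*} (G : SimpleGraph V) (k : ℕ) : ℝ :=
  (cycleCount G k : ℝ) / (Nat.card V : ℝ)

/-- A graph is `r`-regular if every vertex has exactly `r` neighbors. -/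
def IsRegularGraph {V : Type*} (G : SimpleGraph V) (r : ℕ) : Prop :=
  ∀ v : V, Nat.card (G.neighborSet v) = r

/-- The point `P^r_l` for `1 ≤ l ≤ r`, built from the balanced partition
`r_i = ⌊(r + i - 1) / l⌋`, `i = 1, …, l` (here `i` runs over `0, …, l-1`, so `r_i = (r+i)/l`). -/
noncomputable def extremePoint (r l : ℕ) : ℝ × ℝ :=
  ((1 / 3 : ℝ) * ∑ i ∈ Finset.range l, (((r + i) / l).choose 2 : ℝ),
   (1 / 4 : ℝ) * ∑ i ∈ Finset.range l, (((r + i) / l * (((r + i) / l - 1).choose 2) : ℕ) : ℝ))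

/-- The vertex set of the polygon `Q^r`: the point `P^r_0 = (0, r(r-1)²/8)` together with
the points `P^r_l`, `l = 1, …, r`. -/
noncomputable def extremeSet (r : ℕ) : Set (ℝ × ℝ) :=
  insert ((0 : ℝ), (r : ℝ) * ((r : ℝ) - 1) ^ 2 / 8)
    {p : ℝ × ℝ | ∃ l : ℕ, 1 ≤ l ∧ l ≤ r ∧ p = extremePoint r l}

section Weights

variable {ι : Type*} [Fintype ι]

/-- The cubic functional on vertex weights attached to a reflexive relation with indicator `B`. -/
noncomputable def cliqueEnergy (B : ι → ι → ℝ) (μ : ℝ) (w : ι → ℝ) : ℝ :=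
  ∑ z, ∑ x, ∑ y, w x * w y * w z * (B x y * B y z * (1 - B x z / 2))
    - μ * ∑ x, ∑ y, w x * w y * B x y

theorem sum_transfer_mul [DecidableEq ι] (u v : ι) (h : ι → ℝ) :
    ∑ x, ((if x = v then 1 else 0) - (if x = u then 1 else 0)) * h x = h v - h u := by
  simp [sub_mul, Finset.sum_sub_distrib]

theorem sum_cubic_add_smul (g : ι → ι → ι → ℝ) (w δ : ι → ℝ) :
    ∃ L : ℝ, ∀ t : ℝ,
      ∑ z, ∑ x, ∑ y, (w x + t * δ x) * (w y + t * δ y) * (w z + t * δ z) * g x y z =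
      ∑ z, ∑ x, ∑ y, w x * w y * w z * g x y z + t * L +
      t ^ 2 * (∑ z, w z * ∑ x, δ x * ∑ y, δ y * (g x y z + g x z y + g z x y))
      + t ^ 3 * ∑ z, δ z * ∑ x, δ x * ∑ y, δ y * g x y z := by
  refine ⟨∑ z, ∑ x, ∑ y, (w x * w y * δ z + w x * δ y * w z + δ x * w y * w z) * g x y z,
    fun t => ?_⟩
  have h1 : ∑ z, w z * ∑ x, δ x * ∑ y, δ y * (g x y z + g x z y + g z x y) =
      ∑ z, ∑ x, ∑ y, (δ x * δ y * w z + δ x * w y * δ z + w x * δ y * δ z) * g x y z := by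
    have e1 : ∑ z, ∑ x, ∑ y, δ x * w y * δ z * g x y z =
        ∑ z, ∑ x, ∑ y, δ x * w z * δ y * g x z y := by
      rw [Finset.sum_comm]
      conv_rhs => rw [Finset.sum_comm]
      exact Finset.sum_congr rfl fun x _ => Finset.sum_comm
    have e2 : ∑ z, ∑ x, ∑ y, w x * δ y * δ z * g x y z =
        ∑ z, ∑ x, ∑ y, w z * δ x * δ y * g z x y := by
      rw [Finset.sum_comm]
      exact Finset.sum_congr rfl fun x _ => Finset.sum_comm
    simp only [add_mul, Finset.sum_add_distrib]
    rw [e1, e2]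
    simp only [← Finset.sum_add_distrib, Finset.mul_sum]
    refine Finset.sum_congr rfl fun z _ => Finset.sum_congr rfl fun x _ =>
      Finset.sum_congr rfl fun y _ => ?_
    ring
  rw [h1]
  simp only [← Finset.sum_add_distrib, Finset.mul_sum]
  refine Finset.sum_congr rfl fun z _ => Finset.sum_congr rfl fun x _ =>
    Finset.sum_congr rfl fun y _ => ?_
  ring

theorem sum_quadratic_add_smul (g : ι → ι → ℝ) (w δ : ι → ℝ) :
    ∃ L : ℝ, ∀ t : ℝ,
      ∑ x, ∑ y, (w x + t * δ x) * (w y + t * δ y) * g x y =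
      ∑ x, ∑ y, w x * w y * g x y + t * L + t ^ 2 * (∑ x, δ x * ∑ y, δ y * g x y) := by
  refine ⟨∑ x, ∑ y, (w x * δ y + δ x * w y) * g x y, fun t => ?_⟩
  simp only [← Finset.sum_add_distrib, Finset.mul_sum]
  refine Finset.sum_congr rfl fun x _ => Finset.sum_congr rfl fun y _ => ?_
  ring

variable {B : ι → ι → ℝ}

theorem cliqueEnergy_transfer [DecidableEq ι] (hB : ∀ x y, B x y = 0 ∨ B x y = 1)
    (hs : ∀ x y, B x y = B y x) (hr : ∀ x, B x x = 1) (μ : ℝ) {w : ι → ℝ} (hw : ∀ x, 0 ≤ w x)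
    {u v : ι} (huv : B u v = 1) :
    ∃ L Q : ℝ, Q ≤ 0 ∧ ∀ t : ℝ, cliqueEnergy B μ
      (fun x => w x + t * ((if x = v then 1 else 0) - (if x = u then 1 else 0))) =
      cliqueEnergy B μ w + t * L + t ^ 2 * Q := by
  obtain ⟨L₁, h₁⟩ := sum_cubic_add_smul (fun x y z => B x y * B y z * (1 - B x z / 2)) w
    (fun x => (if x = v then 1 else 0) - (if x = u then 1 else 0))
  obtain ⟨L₂, h₂⟩ := sum_quadratic_add_smul B w
    (fun x => (if x = v then 1 else 0) - (if x = u then 1 else 0))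
  simp only [sum_transfer_mul] at h₁ h₂
  have hvu : B v u = 1 := by rw [hs, huv]
  have h₃ : ∀ x, B v v * B v x * (1 - B v x / 2) + B v x * B x v * (1 - B v v / 2) +
      B x v * B v v * (1 - B x v / 2) - (B v u * B u x * (1 - B v x / 2) +
      B v x * B x u * (1 - B v u / 2) + B x v * B v u * (1 - B x u / 2)) -
      (B u v * B v x * (1 - B u x / 2) + B u x * B x v * (1 - B u v / 2) +
      B x u * B u v * (1 - B x v / 2) - (B u u * B u x * (1 - B u x / 2) +
      B u x * B x u * (1 - B u u / 2) + B x u * B u u * (1 - B x u / 2))) =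
      -((B u x - B v x) ^ 2 / 2) := by
    intro x
    rw [hr, hr, huv, hvu, hs x u, hs x v]
    rcases hB u x with h | h <;> rcases hB v x with h' | h' <;> rw [h, h'] <;> norm_num
  simp only [h₃] at h₁
  refine ⟨L₁ - μ * L₂, ∑ x, w x * -((B u x - B v x) ^ 2 / 2), ?_, fun t => ?_⟩
  · refine Finset.sum_nonpos fun x _ => mul_nonpos_of_nonneg_of_nonpos (hw x) ?_
    linarith [sq_nonneg (B u x - B v x)]
  · unfold cliqueEnergy
    rw [h₁, h₂]
    simp only [hr, huv, hvu]
    ring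

theorem exists_transfer_cliqueEnergy_le (hB : ∀ x y, B x y = 0 ∨ B x y = 1)
    (hs : ∀ x y, B x y = B y x) (hr : ∀ x, B x x = 1) (μ : ℝ) {w : ι → ℕ}
    {u v : ι} (hne : u ≠ v) (huv : B u v = 1) (hu : w u ≠ 0) (hv : w v ≠ 0) :
    ∃ w' : ι → ℕ, ∑ x, w' x = ∑ x, w x ∧
      cliqueEnergy B μ (fun x => w' x) ≤ cliqueEnergy B μ (fun x => w x) ∧
      (Finset.univ.filter fun x => w' x ≠ 0).card < (Finset.univ.filter fun x => w x ≠ 0).card := by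
  classical
  have key : ∀ a b : ι, a ≠ b → w a ≠ 0 → w b ≠ 0 → ∃ w' : ι → ℕ, ∑ x, w' x = ∑ x, w x ∧
      (∀ x, (w' x : ℝ) =
        w x + w a * ((if x = b then 1 else 0) - (if x = a then 1 else 0))) ∧
      (Finset.univ.filter fun x => w' x ≠ 0).card <
        (Finset.univ.filter fun x => w x ≠ 0).card := by
    intro a b hab ha hb
    have hw' : ∀ x, ((if x = a then 0 else if x = b then w a + w b else w x : ℕ) : ℝ) =
        w x + w a * ((if x = b then 1 else 0) - (if x = a then 1 else 0)) := by
      intro x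
      rcases eq_or_ne x a with rfl | hxa
      · simp [hab]
      · rcases eq_or_ne x b with rfl | hxb
        · simp [hxa, add_comm]
        · simp [hxa, hxb]
    refine ⟨fun x => if x = a then 0 else if x = b then w a + w b else w x, ?_, hw', ?_⟩
    · have : (∑ x, ((if x = a then 0 else if x = b then w a + w b else w x : ℕ) : ℝ)) =
          ∑ x, (w x : ℝ) := by
        simp only [hw', Finset.sum_add_distrib, ← Finset.mul_sum, Finset.sum_sub_distrib]
        simp
      exact_mod_cast this
    · refine Finset.card_lt_card (Finset.ssubset_iff_of_subset ?_ |>.2 ⟨a, ?_⟩)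
      · intro x
        simp only [Finset.mem_filter, Finset.mem_univ, true_and]
        split_ifs with h1 h2
        · simp
        · subst h2; simp [hb]
        · simp
      · simp [ha]
  obtain ⟨L, Q, hQ, h⟩ := cliqueEnergy_transfer hB hs hr μ (w := fun x => (w x : ℝ))
    (fun x => Nat.cast_nonneg _) huv
  obtain ⟨w₁, hs₁, hw₁, hc₁⟩ := key u v hne hu hv
  obtain ⟨w₂, hs₂, hw₂, hc₂⟩ := key v u hne.symm hv hu
  have e₁ : cliqueEnergy B μ (fun x => w₁ x) = _ := (congrArg _ (funext hw₁)).trans (h (w u))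
  have e₂ : cliqueEnergy B μ (fun x => w₂ x) = _ := (congrArg _ (funext fun x => by
    rw [hw₂]; ring)).trans (h (-(w v)))
  have hup : (0 : ℝ) < w u := by positivity
  have hvp : (0 : ℝ) < w v := by positivity
  rcases le_total (cliqueEnergy B μ fun x => w₁ x) (cliqueEnergy B μ fun x => w x) with hle | hle
  · exact ⟨w₁, hs₁, hle, hc₁⟩
  · refine ⟨w₂, hs₂, ?_, hc₂⟩
    have hL : 0 ≤ L := by
      by_contra hL
      nlinarith [mul_pos hup (neg_pos.2 (not_le.1 hL)), mul_nonneg (sq_nonneg (w u : ℝ))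
        (neg_nonneg.2 hQ)]
    nlinarith [mul_nonneg hvp.le hL, mul_nonneg (sq_nonneg (w v : ℝ)) (neg_nonneg.2 hQ)]

theorem exists_independent_cliqueEnergy_le (hB : ∀ x y, B x y = 0 ∨ B x y = 1)
    (hs : ∀ x y, B x y = B y x) (hr : ∀ x, B x x = 1) (μ : ℝ) (w : ι → ℕ) :
    ∃ w' : ι → ℕ, ∑ x, w' x = ∑ x, w x ∧
      ∑ x, ((w' x : ℝ) ^ 3 / 2 - μ * (w' x : ℝ) ^ 2) ≤ cliqueEnergy B μ (fun x => w x) := by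
  classical
  induction hn : (Finset.univ.filter fun x => w x ≠ 0).card using Nat.strong_induction_on
    generalizing w with
  | _ n ih =>
  by_cases hind : ∃ u v, u ≠ v ∧ B u v = 1 ∧ w u ≠ 0 ∧ w v ≠ 0
  · obtain ⟨u, v, hne, huv, hu, hv⟩ := hind
    obtain ⟨w₁, h₁, h₂, h₃⟩ := exists_transfer_cliqueEnergy_le hB hs hr μ hne huv hu hv
    obtain ⟨w₂, h₄, h₅⟩ := ih _ (hn ▸ h₃) w₁ rfl
    exact ⟨w₂, h₄.trans h₁, h₅.trans h₂⟩
  · refine ⟨w, rfl, le_of_eq ?_⟩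
    have hz : ∀ x y, (w x : ℝ) * w y * B x y = if x = y then (w x : ℝ) ^ 2 else 0 := by
      intro x y
      split_ifs with hxy
      · subst hxy; rw [hr]; ring
      · rcases hB x y with h0 | h1
        · rw [h0]; ring
        · by_cases hx : w x = 0
          · simp [hx]
          · by_cases hy : w y = 0
            · simp [hy]
            · exact absurd ⟨x, y, hxy, h1, hx, hy⟩ hind
    have hc : ∀ x y z, (w x : ℝ) * w y * w z * (B x y * B y z * (1 - B x z / 2)) =
        if x = y then (if z = y then (w z : ℝ) ^ 3 / 2 else 0) else 0 := by
      intro x y z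
      have : (w x : ℝ) * w y * w z * (B x y * B y z * (1 - B x z / 2)) =
        ((w x : ℝ) * w y * B x y) * (w z * B y z * (1 - B x z / 2)) := by ring
      rw [this, hz]
      split_ifs with h1 h2
      · subst h1; subst h2; rw [hr]; ring
      · subst h1
        have h3 := hz x z
        rw [if_neg (Ne.symm h2)] at h3
        linear_combination (w x : ℝ) * (1 - B x z / 2) * h3
      · ring
    unfold cliqueEnergy
    simp only [hz, hc]
    simp [Finset.sum_sub_distrib, Finset.mul_sum]

end Weights

section Balancing

theorem sum_range_add_div {l : ℕ} (hl : 0 < l) (r : ℕ) : ∑ i ∈ Finset.range l, (r + i) / l = r := by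
  induction r with
  | zero =>
    refine Finset.sum_eq_zero fun i hi => ?_
    rw [zero_add, Nat.div_eq_of_lt (Finset.mem_range.1 hi)]
  | succ r ih =>
    have h1 := Finset.sum_range_succ' (fun i => (r + i) / l) l
    rw [Finset.sum_range_succ, ih, Nat.add_div_right _ hl] at h1
    have h2 : ∑ i ∈ Finset.range l, (r + 1 + i) / l = ∑ i ∈ Finset.range l, (r + (i + 1)) / l :=
      Finset.sum_congr rfl fun i _ => by congr 1; omega
    rw [h2]
    simp only [add_zero] at h1
    omega

variable {ι : Type*} [Fintype ι]

theorem sum_eq_of_consecutive (F : ℕ → ℝ) {α : Type*} (s : Finset α) (w : α → ℕ) (k r : ℕ)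
    (hw : ∀ x ∈ s, w x = k ∨ w x = k + 1) (hr : ∑ x ∈ s, w x = r) :
    ∑ x ∈ s, F (w x) = s.card * F k + (r - s.card * k) * (F (k + 1) - F k) := by
  have h : ∀ x ∈ s, F (w x) = F k + ((w x : ℝ) - k) * (F (k + 1) - F k) := by
    intro x hx
    rcases hw x hx with h | h <;> rw [h] <;> push_cast <;> ring
  rw [Finset.sum_congr rfl h, Finset.sum_add_distrib, ← Finset.sum_mul, Finset.sum_sub_distrib,
    ← hr]
  simp

theorem sum_eq_sum_balanced (F : ℕ → ℝ) (hF : F 0 = 0) (w : ι → ℕ) {r : ℕ} (hr : 0 < r)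
    (hw : ∑ x, w x = r) (hb : ∀ u v, w u ≠ 0 → w v ≠ 0 → w u ≤ w v + 1) :
    ∃ l, 1 ≤ l ∧ l ≤ r ∧ ∑ x, F (w x) = ∑ i ∈ Finset.range l, F ((r + i) / l) := by
  classical
  set s := Finset.univ.filter fun x => w x ≠ 0 with hs
  have hsum : ∑ x ∈ s, w x = r := by
    rw [← hw, hs, Finset.sum_filter_ne_zero]
  have hne : s.Nonempty := by
    by_contra h
    rw [Finset.not_nonempty_iff_eq_empty.1 h] at hsum
    simp at hsum; omega
  obtain ⟨m, hm, hmin⟩ := s.exists_min_image w hne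
  have hk : ∀ x ∈ s, w x = w m ∨ w x = w m + 1 := by
    intro x hx
    have h1 := hmin x hx
    have h2 := hb x m (by simpa [hs] using hx) (by simpa [hs] using hm)
    omega
  have hm0 : w m ≠ 0 := by simpa [hs] using hm
  have hlr : s.card * w m ≤ r := by
    rw [← hsum, ← smul_eq_mul]
    exact Finset.card_nsmul_le_sum _ _ _ fun x hx => hmin x hx
  have hrl : r ≤ s.card * (w m + 1) := by
    rw [← hsum, ← smul_eq_mul]
    exact Finset.sum_le_card_nsmul _ _ _ fun x hx => by have := hk x hx; omega
  have hl : 0 < s.card := hne.card_pos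
  refine ⟨s.card, hl, ?_, ?_⟩
  · nlinarith [Nat.pos_of_ne_zero hm0]
  · have e1 : ∑ x, F (w x) = ∑ x ∈ s, F (w x) := by
      refine (Finset.sum_subset (Finset.subset_univ _) fun x _ hx => ?_).symm
      have : w x = 0 := by simpa [hs] using hx
      rw [this, hF]
    rw [e1, sum_eq_of_consecutive F s w (w m) r hk hsum,
      sum_eq_of_consecutive F (Finset.range s.card) (fun i => (r + i) / s.card) (w m) r ?_
        (sum_range_add_div hl r), Finset.card_range]
    intro i hi
    have hi := Finset.mem_range.1 hi
    have h1 : w m ≤ (r + i) / s.card := by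
      rw [Nat.le_div_iff_mul_le hl]; nlinarith
    have h2 : (r + i) / s.card < w m + 2 := by
      rw [Nat.div_lt_iff_lt_mul hl]; nlinarith
    show (r + i) / s.card = _ ∨ (r + i) / s.card = _
    omega

theorem sum_replace_two [DecidableEq ι] {M : Type*} [AddCommMonoid M] (F : ℕ → M) (w : ι → ℕ)
    {u v : ι} (huv : u ≠ v) (a b : ℕ) :
    ∑ x, F (if x = u then a else if x = v then b else w x) + (F (w u) + F (w v)) =
      ∑ x, F (w x) + (F a + F b) := by
  have hv : v ∈ Finset.univ.erase u := by simp [huv.symm]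
  rw [← Finset.add_sum_erase _ _ (Finset.mem_univ u), ← Finset.add_sum_erase _ _ hv,
    ← Finset.add_sum_erase _ (fun x => F (w x)) (Finset.mem_univ u),
    ← Finset.add_sum_erase _ (fun x => F (w x)) hv]
  have h : ∑ x ∈ (Finset.univ.erase u).erase v,
      F (if x = u then a else if x = v then b else w x) =
      ∑ x ∈ (Finset.univ.erase u).erase v, F (w x) := by
    refine Finset.sum_congr rfl fun x hx => ?_
    simp only [Finset.mem_erase, Finset.mem_univ, and_true, ne_eq] at hx
    rw [if_neg hx.2, if_neg hx.1]
  rw [h]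
  simp only [if_true, if_neg huv.symm]
  abel

theorem exists_balanced_sum_le (μ : ℝ) {r : ℕ} (hr : 0 < r) (w : ι → ℕ) (hw : ∑ x, w x = r) :
    ∃ l, 1 ≤ l ∧ l ≤ r ∧
      ∑ i ∈ Finset.range l, ((((r + i) / l : ℕ) : ℝ) ^ 3 / 2 - μ * (((r + i) / l : ℕ) : ℝ) ^ 2) ≤
        ∑ x, ((w x : ℝ) ^ 3 / 2 - μ * (w x : ℝ) ^ 2) := by
  classical
  set F : ℕ → ℝ := fun n => (n : ℝ) ^ 3 / 2 - μ * (n : ℝ) ^ 2 with hF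
  induction hn : (∑ x, (if w x ≠ 0 then 1 else 0 : ℕ)) using Nat.strong_induction_on
    generalizing w with
  | _ n ihn =>
  induction hm : ∑ x, w x ^ 2 using Nat.strong_induction_on generalizing w with
  | _ m ihm =>
  by_cases hb : ∀ u v, w u ≠ 0 → w v ≠ 0 → w u ≤ w v + 1
  · obtain ⟨l, h1, h2, h3⟩ := sum_eq_sum_balanced F (by simp [hF]) w hr hw hb
    exact ⟨l, h1, h2, h3.ge⟩
  · push Not at hb
    obtain ⟨u, v, hu, hv, huv⟩ := hb
    have hne : u ≠ v := by rintro rfl; omega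
    have hsum := fun a b => sum_replace_two (fun n => n) w hne a b
    have hsq := fun a b => sum_replace_two (fun n => n ^ 2) w hne a b
    have hsupp := fun a b => sum_replace_two (fun n => (if n ≠ 0 then 1 else 0 : ℕ)) w hne a b
    have hFs := fun a b => sum_replace_two F w hne a b
    beta_reduce at hsum hsq hsupp
    rcases le_total (3 * ((w u : ℝ) + w v)) (4 * μ) with hc | hc
    · obtain ⟨l, h1, h2, h3⟩ := ihn _ (by
        have := hsupp (w u + w v) 0
        simp only [ne_eq, hu, hv, not_false_eq_true, if_true, hn, not_true, if_false,
          show w u + w v ≠ 0 by omega] at this ⊢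
        omega) (fun x => if x = u then w u + w v else if x = v then 0 else w x) (by
        have := hsum (w u + w v) 0; omega) rfl
      refine ⟨l, h1, h2, h3.trans ?_⟩
      have := hFs (w u + w v) 0
      have h4 : F (w u + w v) + F 0 ≤ F (w u) + F (w v) := by
        simp only [hF]; push_cast
        nlinarith [mul_nonneg (mul_nonneg (Nat.cast_nonneg (α := ℝ) (w u))
          (Nat.cast_nonneg (α := ℝ) (w v))) (sub_nonneg.2 hc)]
      linarith
    · obtain ⟨l, h1, h2, h3⟩ := ihm _ (by
        have := hsq (w u - 1) (w v + 1)
        have e : w u = (w u - 1) + 1 := by omega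
        generalize w u - 1 = a at *
        rw [e] at this
        nlinarith) (fun x => if x = u then w u - 1 else if x = v then w v + 1 else w x) (by
        have := hsum (w u - 1) (w v + 1); omega) (by
        have := hsupp (w u - 1) (w v + 1)
        simp only [ne_eq, hu, hv, not_false_eq_true, if_true, hn,
          show w u - 1 ≠ 0 by omega, show w v + 1 ≠ 0 by omega] at this ⊢
        omega) rfl
      refine ⟨l, h1, h2, h3.trans ?_⟩
      have := hFs (w u - 1) (w v + 1)
      have h4 : F (w u - 1) + F (w v + 1) ≤ F (w u) + F (w v) := by
        obtain ⟨a, ha⟩ : ∃ a, w u = a + 1 := ⟨w u - 1, by omega⟩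
        rw [ha] at hc huv ⊢
        have h5 : (w v : ℝ) + 1 ≤ a := by exact_mod_cast (by omega : w v + 1 ≤ a)
        simp only [hF, Nat.add_sub_cancel]; push_cast at hc ⊢
        nlinarith [mul_nonneg (sub_nonneg.2 h5) (sub_nonneg.2 hc)]
      linarith

end Balancing

section Graph

variable {V : Type*}

open Classical in
/-- The real-valued indicator of a proposition. -/
noncomputable def boolInd (p : Prop) : ℝ := if p then 1 else 0

theorem boolInd_true {p : Prop} (h : p) : boolInd p = 1 := by
  simp [boolInd, h]

theorem boolInd_false {p : Prop} (h : ¬p) : boolInd p = 0 := by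
  simp [boolInd, h]

theorem boolInd_nonneg (p : Prop) : 0 ≤ boolInd p := by unfold boolInd; split_ifs <;> norm_num

theorem boolInd_le_one (p : Prop) : boolInd p ≤ 1 := by unfold boolInd; split_ifs <;> norm_num

/-- The indicator of adjacency. -/
noncomputable def adjInd (G : SimpleGraph V) (x y : V) : ℝ := boolInd (G.Adj x y)

theorem adjInd_zero_or_one (G : SimpleGraph V) (x y : V) : adjInd G x y = 0 ∨ adjInd G x y = 1 := by
  unfold adjInd boolInd; split_ifs <;> simp

theorem adjInd_comm (G : SimpleGraph V) (x y : V) : adjInd G x y = adjInd G y x := by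
  simp [adjInd, G.adj_comm]

theorem adjInd_nonneg (G : SimpleGraph V) (x y : V) : 0 ≤ adjInd G x y := boolInd_nonneg _

theorem adjInd_le_one (G : SimpleGraph V) (x y : V) : adjInd G x y ≤ 1 := boolInd_le_one _

theorem adjInd_self (G : SimpleGraph V) (x : V) : adjInd G x x = 0 := by
  simp [adjInd, boolInd]

/-- The indicator of `x, a, b, z` being, in this cyclic order, a `4`-cycle. -/
noncomputable def fourCycleInd (G : SimpleGraph V) (x a b z : V) : ℝ :=
  boolInd (x ≠ b) * boolInd (a ≠ z) * (adjInd G x a * adjInd G a b * adjInd G b z * adjInd G z x)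

theorem fourCycleInd_nonneg (G : SimpleGraph V) (x a b z : V) : 0 ≤ fourCycleInd G x a b z :=
  mul_nonneg (mul_nonneg (boolInd_nonneg _) (boolInd_nonneg _)) <| mul_nonneg (mul_nonneg
    (mul_nonneg (adjInd_nonneg G _ _) (adjInd_nonneg G _ _)) (adjInd_nonneg G _ _))
    (adjInd_nonneg G _ _)

theorem fourCycleInd_rotate (G : SimpleGraph V) (x a b z : V) :
    fourCycleInd G x a b z = fourCycleInd G a b z x := by
  unfold fourCycleInd
  rw [show (x ≠ b) = (b ≠ x) by rw [ne_comm]]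
  ring

theorem closed_relation_triple (G : SimpleGraph V) (a b z : V) :
    (adjInd G a b + boolInd (a = b)) * (adjInd G b z + boolInd (b = z)) *
      (1 - (adjInd G a z + boolInd (a = z)) / 2) =
    boolInd (a ≠ z) * adjInd G a b * adjInd G b z
      - adjInd G a b * adjInd G b z * adjInd G a z / 2
      + boolInd (a = b) * adjInd G a z / 2 + boolInd (b = z) * adjInd G a b / 2
      + boolInd (a = z) * adjInd G a b / 2 + boolInd (a = b) * boolInd (b = z) / 2 := by
  rcases eq_or_ne a b with rfl | hab
  · rcases eq_or_ne a z with rfl | haz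
    · simp [boolInd, adjInd_self]; norm_num
    · rcases adjInd_zero_or_one G a z with h | h <;>
        simp [boolInd, adjInd_self, haz, h] <;> norm_num
  · rcases eq_or_ne b z with rfl | hbz
    · rcases adjInd_zero_or_one G a b with h | h <;>
        simp [boolInd, adjInd_self, hab, h] <;> norm_num
    · rcases eq_or_ne a z with rfl | haz
      · rw [adjInd_comm G b a]
        rcases adjInd_zero_or_one G a b with h | h <;>
          simp [boolInd, adjInd_self, hab, hbz, h] <;> norm_num
      · simp [boolInd, hab, hbz, haz]; ring

variable [Fintype V]

/-- The number of ordered triples spanning a triangle. -/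
noncomputable def triangleSum (G : SimpleGraph V) : ℝ :=
  ∑ x, ∑ a, ∑ b, adjInd G x a * adjInd G a b * adjInd G b x

/-- The number of ordered quadruples spanning a `4`-cycle in cyclic order. -/
noncomputable def fourCycleSum (G : SimpleGraph V) : ℝ :=
  ∑ x, ∑ z, ∑ a, ∑ b, fourCycleInd G x a b z

theorem sum_adjInd {G : SimpleGraph V} {r : ℕ} (hG : IsRegularGraph G r) (x : V) :
    ∑ y, adjInd G x y = r := by
  classical
  rw [← hG x, Nat.card_eq_fintype_card]
  simp [adjInd, boolInd]

theorem cliqueEnergy_neighborhood {G : SimpleGraph V} {r : ℕ} (hG : IsRegularGraph G r) (μ : ℝ)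
    (x : V) :
    cliqueEnergy (fun a b => adjInd G a b + boolInd (a = b)) μ (adjInd G x) =
      ∑ z, ∑ a, ∑ b, fourCycleInd G x a b z * (adjInd G x b - adjInd G x b * adjInd G a z / 2)
      + (3 / 2 - μ) * ∑ a, ∑ b, adjInd G x a * adjInd G a b * adjInd G b x
      + (1 / 2 - μ) * r := by
  have hsq : ∀ a, adjInd G x a * adjInd G x a = adjInd G x a := by
    intro a; rcases adjInd_zero_or_one G x a with h | h <;> simp [h]
  have hdiag : ∀ f : V → ℝ, ∀ a, ∑ b, boolInd (a = b) * f b = f a := by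
    intro f a; classical simp [boolInd]
  set E := ∑ a, ∑ b, adjInd G x a * adjInd G a b * adjInd G b x with hE
  have h2 : ∑ a, ∑ b, adjInd G x a * adjInd G x b * (adjInd G a b + boolInd (a = b)) = E + r := by
    rw [← sum_adjInd hG x, hE, ← Finset.sum_add_distrib]
    refine Finset.sum_congr rfl fun a _ => ?_
    have h := hdiag (fun b => adjInd G x a * adjInd G x b) a
    beta_reduce at h
    trans ∑ b, adjInd G x a * adjInd G a b * adjInd G b x +
      ∑ b, boolInd (a = b) * (adjInd G x a * adjInd G x b)
    swap
    · rw [h, hsq]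
    rw [← Finset.sum_add_distrib]
    refine Finset.sum_congr rfl fun b _ => ?_
    rw [adjInd_comm G b x]; ring
  have h3 : ∑ z, ∑ a, ∑ b, adjInd G x a * adjInd G x b * adjInd G x z *
      (boolInd (a = b) * adjInd G a z) = E := by
    rw [Finset.sum_comm, hE]
    refine Finset.sum_congr rfl fun a _ => Finset.sum_congr rfl fun z _ => ?_
    have := hdiag (fun b => adjInd G x a * adjInd G x b * adjInd G x z * adjInd G a z) a
    beta_reduce at this
    trans adjInd G x a * adjInd G x a * adjInd G x z * adjInd G a z
    · rw [← this]
      refine Finset.sum_congr rfl fun b _ => ?_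
      ring
    · rw [hsq a, adjInd_comm G z x]; ring
  have h4 : ∑ z, ∑ a, ∑ b, adjInd G x a * adjInd G x b * adjInd G x z *
      (boolInd (b = z) * adjInd G a b) = E := by
    rw [Finset.sum_comm, hE]
    refine Finset.sum_congr rfl fun a _ => ?_
    rw [Finset.sum_comm]
    refine Finset.sum_congr rfl fun b _ => ?_
    rw [adjInd_comm G b x, ← hsq b]
    have := hdiag (fun z => adjInd G x a * adjInd G x b * adjInd G x z * adjInd G a b) b
    beta_reduce at this
    trans adjInd G x a * adjInd G x b * adjInd G x b * adjInd G a b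
    · rw [← this]
      refine Finset.sum_congr rfl fun z _ => ?_
      rw [hsq b]; ring
    · ring
  have h5 : ∑ z, ∑ a, ∑ b, adjInd G x a * adjInd G x b * adjInd G x z *
      (boolInd (a = z) * adjInd G a b) = E := by
    rw [Finset.sum_comm, hE]
    refine Finset.sum_congr rfl fun a _ => ?_
    rw [Finset.sum_comm]
    refine Finset.sum_congr rfl fun b _ => ?_
    have := hdiag (fun z => adjInd G x a * adjInd G x b * adjInd G x z * adjInd G a b) a
    beta_reduce at this
    trans adjInd G x a * adjInd G x b * adjInd G x a * adjInd G a b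
    · rw [← this]
      refine Finset.sum_congr rfl fun z _ => ?_
      ring
    · rw [adjInd_comm G b x]
      linear_combination (adjInd G x b * adjInd G a b) * hsq a
  have h6 : ∑ z, ∑ a, ∑ b, adjInd G x a * adjInd G x b * adjInd G x z *
      (boolInd (a = b) * boolInd (b = z)) = r := by
    rw [← sum_adjInd hG x]
    refine Finset.sum_congr rfl fun z _ => ?_
    rw [Finset.sum_comm]
    trans ∑ b, boolInd (z = b) * (∑ a, boolInd (b = a) * (adjInd G x a * adjInd G x b * adjInd G x z))
    · refine Finset.sum_congr rfl fun b _ => ?_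
      rw [Finset.mul_sum]
      refine Finset.sum_congr rfl fun a _ => ?_
      rw [eq_comm (a := a), eq_comm (a := b) (b := z)]
      ring
    · simp only [hdiag, hsq]
  have h7 : ∑ z, ∑ a, ∑ b, adjInd G x a * adjInd G x b * adjInd G x z *
      (boolInd (a ≠ z) * adjInd G a b * adjInd G b z
        - adjInd G a b * adjInd G b z * adjInd G a z / 2) =
      ∑ z, ∑ a, ∑ b, fourCycleInd G x a b z *
        (adjInd G x b - adjInd G x b * adjInd G a z / 2) := by
    refine Finset.sum_congr rfl fun z _ => Finset.sum_congr rfl fun a _ =>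
      Finset.sum_congr rfl fun b _ => ?_
    unfold fourCycleInd
    rw [adjInd_comm G z x]
    rcases eq_or_ne x b with rfl | hxb
    · simp [adjInd_self]
    · rw [boolInd_true hxb]
      rcases eq_or_ne a z with rfl | haz
      · simp [adjInd_self, boolInd]
      · rw [boolInd_true haz]; ring
  unfold cliqueEnergy
  simp only [closed_relation_triple]
  rw [h2, ← h7]
  trans (∑ z, ∑ a, ∑ b, adjInd G x a * adjInd G x b * adjInd G x z *
      (boolInd (a ≠ z) * adjInd G a b * adjInd G b z
        - adjInd G a b * adjInd G b z * adjInd G a z / 2)) + E / 2 + E / 2 + E / 2 + (r : ℝ) / 2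
        - μ * (E + r)
  · congr 1
    nth_rw 1 [← h3]
    nth_rw 1 [← h4]
    nth_rw 1 [← h5]
    rw [← h6]
    simp only [Finset.sum_div, ← Finset.sum_add_distrib]
    refine Finset.sum_congr rfl fun z _ => Finset.sum_congr rfl fun a _ =>
      Finset.sum_congr rfl fun b _ => ?_
    ring
  · ring

theorem balanced_value (r lam : ℝ) (l : ℕ) (s : ℕ → ℕ) (hs : ∑ i ∈ Finset.range l, (s i : ℝ) = r) :
    ∑ i ∈ Finset.range l, ((s i * ((s i - 1).choose 2) : ℕ) : ℝ)
      - lam * ∑ i ∈ Finset.range l, ((s i).choose 2 : ℝ) =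
    ∑ i ∈ Finset.range l, ((s i : ℝ) ^ 3 / 2 - (3 + lam) / 2 * (s i : ℝ) ^ 2)
      + (1 + lam / 2) * r := by
  rw [← hs, Finset.mul_sum, Finset.mul_sum, ← Finset.sum_sub_distrib, ← Finset.sum_add_distrib]
  refine Finset.sum_congr rfl fun i _ => ?_
  rcases s i with _ | n
  · simp
  · rw [Nat.add_sub_cancel]
    push_cast
    rw [Nat.cast_choose_two, Nat.cast_choose_two]
    push_cast
    ring

theorem le_neighborhood_of_le_balanced {G : SimpleGraph V} {r : ℕ} (hr : 0 < r)
    (hG : IsRegularGraph G r) {c lam : ℝ}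
    (hc : ∀ l, 1 ≤ l → l ≤ r →
      c ≤ ∑ i ∈ Finset.range l, (((r + i) / l * (((r + i) / l - 1).choose 2) : ℕ) : ℝ)
        - lam * ∑ i ∈ Finset.range l, (((r + i) / l).choose 2 : ℝ)) (x : V) :
    c ≤ ∑ z, ∑ a, ∑ b, fourCycleInd G x a b z * (adjInd G x b - adjInd G x b * adjInd G a z / 2)
      - lam / 2 * ∑ a, ∑ b, adjInd G x a * adjInd G a b * adjInd G b x := by
  classical
  obtain ⟨w, hw, hle⟩ := exists_independent_cliqueEnergy_le
    (B := fun a b => adjInd G a b + boolInd (a = b)) (fun a b => by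
      rcases eq_or_ne a b with rfl | h
      · right; simp [adjInd_self, boolInd]
      · simpa [boolInd, h] using adjInd_zero_or_one G a b)
    (fun a b => by rw [adjInd_comm, eq_comm (a := a)]) (fun a => by simp [adjInd_self, boolInd])
    ((3 + lam) / 2) (fun y => if G.Adj x y then 1 else 0)
  have hA : (fun y => ((if G.Adj x y then 1 else 0 : ℕ) : ℝ)) = adjInd G x := by
    funext y; simp [adjInd, boolInd]
  have hwr : ∑ y, w y = r := by
    rw [hw]
    have := sum_adjInd hG x
    rw [← hA] at this
    beta_reduce at this
    exact_mod_cast this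
  rw [hA, cliqueEnergy_neighborhood hG] at hle
  obtain ⟨l, h1, h2, h3⟩ := exists_balanced_sum_le ((3 + lam) / 2) hr w hwr
  have h4 := hc l h1 h2
  rw [balanced_value r lam l (fun i => (r + i) / l) (by exact_mod_cast sum_range_add_div h1 r)] at h4
  linarith

theorem sum_four_rotate (F : V → V → V → V → ℝ) :
    ∑ p, ∑ q, ∑ r, ∑ s, F p q r s = ∑ r, ∑ p, ∑ s, ∑ q, F p q r s := by
  rw [Finset.sum_comm (f := fun r p => ∑ s, ∑ q, F p q r s)]
  refine Finset.sum_congr rfl fun p _ => ?_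
  rw [Finset.sum_comm]
  exact Finset.sum_congr rfl fun r _ => Finset.sum_comm

theorem card_mul_le_of_le_balanced {G : SimpleGraph V} {r : ℕ} (hr : 0 < r)
    (hG : IsRegularGraph G r) {c lam : ℝ}
    (hc : ∀ l, 1 ≤ l → l ≤ r →
      c ≤ ∑ i ∈ Finset.range l, (((r + i) / l * (((r + i) / l - 1).choose 2) : ℕ) : ℝ)
        - lam * ∑ i ∈ Finset.range l, (((r + i) / l).choose 2 : ℝ)) :
    Fintype.card V * c ≤ fourCycleSum G / 2 - lam / 2 * triangleSum G := by
  have h1 : Fintype.card V * c ≤ ∑ x, (∑ z, ∑ a, ∑ b, fourCycleInd G x a b z *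
      (adjInd G x b - adjInd G x b * adjInd G a z / 2)
      - lam / 2 * ∑ a, ∑ b, adjInd G x a * adjInd G a b * adjInd G b x) := by
    rw [← nsmul_eq_mul]
    exact Finset.card_nsmul_le_sum _ _ _ fun x _ => le_neighborhood_of_le_balanced hr hG hc x
  rw [Finset.sum_sub_distrib, ← Finset.mul_sum] at h1
  refine h1.trans (sub_le_sub_right ?_ _)
  have h2 : ∑ x, ∑ z, ∑ a, ∑ b, fourCycleInd G x a b z * adjInd G a z =
      ∑ x, ∑ z, ∑ a, ∑ b, fourCycleInd G x a b z * adjInd G x b := by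
    rw [sum_four_rotate (fun x z a b => fourCycleInd G x a b z * adjInd G x b)]
    refine Finset.sum_congr rfl fun x _ => Finset.sum_congr rfl fun z _ =>
      Finset.sum_congr rfl fun a _ => Finset.sum_congr rfl fun b _ => ?_
    rw [fourCycleInd_rotate G z x a b, adjInd_comm G a z]
  have h3 : ∑ x, ∑ z, ∑ a, ∑ b, fourCycleInd G x a b z *
      (adjInd G x b - adjInd G x b * adjInd G a z / 2) =
      (∑ x, ∑ z, ∑ a, ∑ b, fourCycleInd G x a b z * (adjInd G x b + adjInd G a z
        - adjInd G x b * adjInd G a z)) / 2 := by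
    simp only [mul_sub, mul_add, Finset.sum_sub_distrib, Finset.sum_add_distrib]
    rw [h2]
    simp only [mul_div_assoc', ← Finset.sum_div]
    ring
  rw [h3]
  refine div_le_div_of_nonneg_right ?_ (by norm_num)
  refine Finset.sum_le_sum fun x _ => Finset.sum_le_sum fun z _ => Finset.sum_le_sum fun a _ =>
    Finset.sum_le_sum fun b _ => mul_le_of_le_one_right (fourCycleInd_nonneg G x a b z) ?_
  rcases adjInd_zero_or_one G x b with h | h <;> rcases adjInd_zero_or_one G a z with h' | h' <;>
    rw [h, h'] <;> norm_num

end Graph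

section UpperBounds

variable {V : Type*} [Fintype V]

theorem sum_adjInd_ne {G : SimpleGraph V} {r : ℕ} (hG : IsRegularGraph G r) (x a : V) :
    adjInd G x a * ∑ b, boolInd (b ≠ x) * adjInd G a b = adjInd G x a * (r - 1) := by
  classical
  have h : ∑ b, boolInd (b ≠ x) * adjInd G a b = r - adjInd G a x := by
    rw [← sum_adjInd hG a, eq_sub_iff_add_eq]
    have : adjInd G a x = ∑ b, (if b = x then 1 else 0) * adjInd G a b := by simp
    rw [this, ← Finset.sum_add_distrib]
    refine Finset.sum_congr rfl fun b _ => ?_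
    by_cases hb : b = x <;> simp [boolInd, hb]
  rw [h, adjInd_comm G a x]
  rcases adjInd_zero_or_one G x a with h | h <;> rw [h] <;> ring

theorem triangleSum_nonneg (G : SimpleGraph V) : 0 ≤ triangleSum G :=
  Finset.sum_nonneg fun _ _ => Finset.sum_nonneg fun _ _ => Finset.sum_nonneg fun _ _ =>
    mul_nonneg (mul_nonneg (adjInd_nonneg G _ _) (adjInd_nonneg G _ _)) (adjInd_nonneg G _ _)

theorem triangleSum_le {G : SimpleGraph V} {r : ℕ} (hG : IsRegularGraph G r) :
    triangleSum G ≤ Fintype.card V * (r * (r - 1)) := by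
  have h : ∑ x, ∑ a, adjInd G x a * ∑ b, boolInd (b ≠ x) * adjInd G a b =
      Fintype.card V * (r * ((r : ℝ) - 1)) := by
    simp [sum_adjInd_ne hG, ← Finset.sum_mul, sum_adjInd hG]
  rw [← h]
  simp only [Finset.mul_sum]
  refine Finset.sum_le_sum fun x _ => Finset.sum_le_sum fun a _ => Finset.sum_le_sum fun b _ => ?_
  rcases eq_or_ne b x with rfl | hb
  · simp [adjInd_self, boolInd]
  · rw [boolInd_true hb, one_mul]
    exact mul_le_of_le_one_right (mul_nonneg (adjInd_nonneg G _ _) (adjInd_nonneg G _ _))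
      (adjInd_le_one G _ _)

theorem fourCycleSum_eq (G : SimpleGraph V) :
    fourCycleSum G = ∑ x, ∑ a, ∑ b, ∑ z, fourCycleInd G x a b z := by
  unfold fourCycleSum
  refine Finset.sum_congr rfl fun x _ => ?_
  rw [Finset.sum_comm]
  exact Finset.sum_congr rfl fun a _ => Finset.sum_comm

theorem fourCycleSum_add_triangleSum_le {G : SimpleGraph V} {r : ℕ} (hG : IsRegularGraph G r) :
    fourCycleSum G + triangleSum G ≤ Fintype.card V * (r * (r - 1) ^ 2) := by
  have h : ∑ x, ∑ a, ∑ b, ∑ z, adjInd G x a * (boolInd (b ≠ x) * adjInd G a b) *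
      (boolInd (z ≠ a) * adjInd G x z) = Fintype.card V * (r * ((r : ℝ) - 1) ^ 2) := by
    have h1 : ∀ x a, ∑ b, ∑ z, adjInd G x a * (boolInd (b ≠ x) * adjInd G a b) *
      (boolInd (z ≠ a) * adjInd G x z) = adjInd G x a * ((r : ℝ) - 1) ^ 2 := by
      intro x a
      simp only [← Finset.mul_sum, ← Finset.sum_mul]
      rw [sum_adjInd_ne hG, mul_right_comm, adjInd_comm G x a, sum_adjInd_ne hG]
      ring
    simp [h1, ← Finset.sum_mul, sum_adjInd hG]
  have hT : triangleSum G = ∑ x, ∑ a, ∑ b, ∑ z,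
      boolInd (b = z) * (adjInd G x a * adjInd G a b * adjInd G b x) := by
    classical
    simp [boolInd, triangleSum]
  rw [← h, hT, fourCycleSum_eq]
  simp only [← Finset.sum_add_distrib]
  refine Finset.sum_le_sum fun x _ => Finset.sum_le_sum fun a _ => Finset.sum_le_sum fun b _ =>
    Finset.sum_le_sum fun z _ => ?_
  unfold fourCycleInd
  rw [ne_comm (a := x), ne_comm (a := a), adjInd_comm G z x]
  rcases eq_or_ne b z with rfl | hbz
  · rw [adjInd_self, boolInd_true rfl, adjInd_comm G b x]
    rcases eq_or_ne b x with rfl | hbx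
    · simp [adjInd_self]
    · rcases eq_or_ne b a with rfl | hba
      · simp [adjInd_self]
      · rw [boolInd_true hbx, boolInd_true hba]; apply le_of_eq; ring
  · rw [boolInd_false hbz, zero_mul, add_zero]
    have h0 : 0 ≤ adjInd G x a * (boolInd (b ≠ x) * adjInd G a b) *
      (boolInd (z ≠ a) * adjInd G x z) :=
      mul_nonneg (mul_nonneg (boolInd_nonneg _) (mul_nonneg (boolInd_nonneg _) (boolInd_nonneg _)))
        (mul_nonneg (boolInd_nonneg _) (boolInd_nonneg _))
    have := mul_le_of_le_one_right h0 (adjInd_le_one G b z)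
    linarith

end UpperBounds

section CycleCounting

variable {V : Type*}

theorem card_eq_two_mul_of_involution {α : Type*} (s : Finset α) (σ : α → α) (p : α → Prop)
    [DecidablePred p] (hσ : ∀ x, σ (σ x) = x) (hs : ∀ x ∈ s, σ x ∈ s)
    (hp : ∀ x ∈ s, p (σ x) ↔ ¬p x) : s.card = 2 * (s.filter p).card := by
  rw [← Finset.card_filter_add_card_filter_not (s := s) p, two_mul, Nat.add_left_cancel_iff]
  refine Finset.card_bij' (fun x _ => σ x) (fun x _ => σ x) ?_ ?_ (fun x _ => hσ x) (fun x _ => hσ x)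
  · intro x hx
    rw [Finset.mem_filter] at hx ⊢
    exact ⟨hs x hx.1, (hp x hx.1).2 hx.2⟩
  · intro x hx
    rw [Finset.mem_filter] at hx ⊢
    exact ⟨hs x hx.1, fun h => (hp x hx.1).1 h hx.2⟩

theorem card_eq_three_mul_of_rotation {α : Type*} (s : Finset α) (σ : α → α) (p : α → Prop)
    [DecidablePred p] (hσ : ∀ x, σ (σ (σ x)) = x) (hs : ∀ x ∈ s, σ x ∈ s)
    (hp : ∀ x ∈ s, (p x ∧ ¬p (σ x) ∧ ¬p (σ (σ x))) ∨ (¬p x ∧ p (σ x) ∧ ¬p (σ (σ x))) ∨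
      (¬p x ∧ ¬p (σ x) ∧ p (σ (σ x)))) : s.card = 3 * (s.filter p).card := by
  have h : ∀ τ : α → α, (∀ x, τ (τ (τ x)) = x) → (∀ x ∈ s, τ x ∈ s) →
      (s.filter fun x => p (τ x)).card = (s.filter p).card := by
    intro τ hτ hτs
    refine Finset.card_bij' (fun x _ => τ x) (fun x _ => τ (τ x)) ?_ ?_ (fun x _ => hτ x)
      (fun x _ => hτ x)
    · intro x hx
      rw [Finset.mem_filter] at hx ⊢
      exact ⟨hτs x hx.1, hx.2⟩
    · intro x hx
      rw [Finset.mem_filter] at hx ⊢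
      exact ⟨hτs _ (hτs x hx.1), by rw [hτ]; exact hx.2⟩
  have h1 := h σ hσ hs
  have h2 := h (fun x => σ (σ x)) (fun x => by simp only [hσ]) (fun x hx => hs _ (hs x hx))
  have h3 : s.card = (s.filter p).card + (s.filter fun x => p (σ x)).card +
      (s.filter fun x => p (σ (σ x))).card := by
    simp only [Finset.card_filter, ← Finset.sum_add_distrib]
    rw [Finset.card_eq_sum_ones]
    refine Finset.sum_congr rfl fun x hx => ?_
    rcases hp x hx with ⟨a, b, c⟩ | ⟨a, b, c⟩ | ⟨a, b, c⟩ <;> simp [a, b, c]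
  omega

open Classical in
/-- The ordered triples spanning a triangle. -/
noncomputable def triangleTuples [Fintype V] (G : SimpleGraph V) : Finset (V × V × V) :=
  Finset.univ.filter fun t => G.Adj t.1 t.2.1 ∧ G.Adj t.2.1 t.2.2 ∧ G.Adj t.2.2 t.1

open Classical in
/-- The ordered quadruples spanning a `4`-cycle in cyclic order. -/
noncomputable def fourCycleTuples [Fintype V] (G : SimpleGraph V) : Finset (V × V × V × V) :=
  Finset.univ.filter fun t => (t.1 ≠ t.2.2.1 ∧ t.2.1 ≠ t.2.2.2) ∧
    G.Adj t.1 t.2.1 ∧ G.Adj t.2.1 t.2.2.1 ∧ G.Adj t.2.2.1 t.2.2.2 ∧ G.Adj t.2.2.2 t.1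

variable [Fintype V]

theorem six_dvd_card_triangleTuples (G : SimpleGraph V) : 6 ∣ (triangleTuples G).card := by
  classical
  let _ : LinearOrder V := linearOrderOfSTO WellOrderingRel
  have h2 := card_eq_two_mul_of_involution (triangleTuples G) (fun t => (t.2.1, t.1, t.2.2))
    (fun t => t.1 < t.2.1) (fun _ => rfl) (by
      rintro ⟨a, b, c⟩ h
      simp only [triangleTuples, Finset.mem_filter, Finset.mem_univ, true_and] at h ⊢
      exact ⟨h.1.symm, h.2.2.symm, h.2.1.symm⟩) (by
      rintro ⟨a, b, c⟩ h
      simp only [triangleTuples, Finset.mem_filter, Finset.mem_univ, true_and] at h ⊢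
      have := h.1.ne
      grind)
  have h3 := card_eq_three_mul_of_rotation (triangleTuples G) (fun t => (t.2.1, t.2.2, t.1))
    (fun t => t.1 < t.2.1 ∧ t.1 < t.2.2) (fun _ => rfl) (by
      rintro ⟨a, b, c⟩ h
      simp only [triangleTuples, Finset.mem_filter, Finset.mem_univ, true_and] at h ⊢
      exact ⟨h.2.1, h.2.2, h.1⟩) (by
      rintro ⟨a, b, c⟩ h
      simp only [triangleTuples, Finset.mem_filter, Finset.mem_univ, true_and] at h ⊢
      have := h.1.ne
      have := h.2.1.ne
      have := h.2.2.ne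
      grind)
  omega

theorem eight_dvd_card_fourCycleTuples (G : SimpleGraph V) : 8 ∣ (fourCycleTuples G).card := by
  classical
  let _ : LinearOrder V := linearOrderOfSTO WellOrderingRel
  have h1 := card_eq_two_mul_of_involution (fourCycleTuples G)
    (fun t => (t.2.2.1, t.2.1, t.1, t.2.2.2)) (fun t => t.1 < t.2.2.1) (fun _ => rfl) (by
      rintro ⟨a, b, c, d⟩ h
      simp only [fourCycleTuples, Finset.mem_filter, Finset.mem_univ, true_and] at h ⊢
      grind [SimpleGraph.adj_comm]) (by
      rintro ⟨a, b, c, d⟩ h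
      simp only [fourCycleTuples, Finset.mem_filter, Finset.mem_univ, true_and] at h ⊢
      grind)
  have h2 := card_eq_two_mul_of_involution ((fourCycleTuples G).filter fun t => t.1 < t.2.2.1)
    (fun t => (t.1, t.2.2.2, t.2.2.1, t.2.1)) (fun t => t.2.1 < t.2.2.2) (fun _ => rfl) (by
      rintro ⟨a, b, c, d⟩ h
      simp only [fourCycleTuples, Finset.mem_filter, Finset.mem_univ, true_and] at h ⊢
      grind [SimpleGraph.adj_comm]) (by
      rintro ⟨a, b, c, d⟩ h
      simp only [fourCycleTuples, Finset.mem_filter, Finset.mem_univ, true_and] at h ⊢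
      grind)
  have h3 := card_eq_two_mul_of_involution (((fourCycleTuples G).filter
    fun t => t.1 < t.2.2.1).filter fun t => t.2.1 < t.2.2.2)
    (fun t => (t.2.1, t.1, t.2.2.2, t.2.2.1)) (fun t => t.1 < t.2.1) (fun _ => rfl) (by
      rintro ⟨a, b, c, d⟩ h
      simp only [fourCycleTuples, Finset.mem_filter, Finset.mem_univ, true_and] at h ⊢
      grind [SimpleGraph.adj_comm]) (by
      rintro ⟨a, b, c, d⟩ h
      simp only [fourCycleTuples, Finset.mem_filter, Finset.mem_univ, true_and] at h ⊢
      have := h.1.1.2.1.ne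
      grind)
  omega

theorem card_triangleTuples (G : SimpleGraph V) : ((triangleTuples G).card : ℝ) = triangleSum G := by
  classical
  unfold triangleTuples triangleSum adjInd boolInd
  rw [Finset.card_filter, Nat.cast_sum]
  simp only [Fintype.sum_prod_type]
  refine Finset.sum_congr rfl fun x _ => Finset.sum_congr rfl fun a _ =>
    Finset.sum_congr rfl fun b _ => ?_
  split_ifs <;> simp_all

theorem card_fourCycleTuples (G : SimpleGraph V) :
    ((fourCycleTuples G).card : ℝ) = fourCycleSum G := by
  classical
  rw [fourCycleSum_eq]
  unfold fourCycleTuples fourCycleInd adjInd boolInd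
  rw [Finset.card_filter, Nat.cast_sum]
  simp only [Fintype.sum_prod_type]
  refine Finset.sum_congr rfl fun x _ => Finset.sum_congr rfl fun a _ =>
    Finset.sum_congr rfl fun b _ => Finset.sum_congr rfl fun z _ => ?_
  simp only [← ite_and, mul_ite, mul_one, mul_zero, Nat.cast_ite, Nat.cast_one, Nat.cast_zero]
  congr 1
  apply propext
  tauto

theorem natCard_cycles_three (G : SimpleGraph V) :
    Nat.card ((x : V) × {p : G.Walk x x // p.IsCycle ∧ p.length = 3}) =
      (triangleTuples G).card := by
  classical
  rw [← Fintype.card_coe, ← Nat.card_eq_fintype_card]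
  have hm : ∀ t, t ∈ triangleTuples G ↔
      G.Adj t.1 t.2.1 ∧ G.Adj t.2.1 t.2.2 ∧ G.Adj t.2.2 t.1 := by simp [triangleTuples]
  symm
  refine Nat.card_congr (Equiv.ofBijective (fun t => ⟨t.1.1, .cons ((hm t.1).1 t.2).1
    (.cons ((hm t.1).1 t.2).2.1 (.cons ((hm t.1).1 t.2).2.2 .nil)), ?_, rfl⟩) ⟨?_, ?_⟩)
  · obtain ⟨⟨a, b, c⟩, h⟩ := t
    have h := (hm _).1 h
    have h1 := h.1.ne
    have h2 := h.2.1.ne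
    have h3 := h.2.2.ne
    simp only at h1 h2 h3
    simp [Walk.cons_isCycle_iff, h1, h2, h3, h1.symm, h3.symm]
  · rintro ⟨⟨a, b, c⟩, h⟩ ⟨⟨a', b', c'⟩, h'⟩ heq
    simp only [Sigma.mk.injEq] at heq
    obtain ⟨rfl, heq⟩ := heq
    have := congrArg (fun p => p.1.support) (eq_of_heq heq)
    simp at this
    simp [this]
  · rintro ⟨x, p, hp, hl⟩
    match p, hp, hl with
    | .cons (v := a) h1 (.cons (v := b) h2 (.cons h3 .nil)), hp, hl =>
      exact ⟨⟨(x, a, b), (hm _).2 ⟨h1, h2, h3⟩⟩, rfl⟩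

theorem natCard_cycles_four (G : SimpleGraph V) :
    Nat.card ((x : V) × {p : G.Walk x x // p.IsCycle ∧ p.length = 4}) =
      (fourCycleTuples G).card := by
  classical
  rw [← Fintype.card_coe, ← Nat.card_eq_fintype_card]
  have hm : ∀ t, t ∈ fourCycleTuples G ↔ (t.1 ≠ t.2.2.1 ∧ t.2.1 ≠ t.2.2.2) ∧
      G.Adj t.1 t.2.1 ∧ G.Adj t.2.1 t.2.2.1 ∧ G.Adj t.2.2.1 t.2.2.2 ∧ G.Adj t.2.2.2 t.1 := by
    simp [fourCycleTuples]
  symm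
  refine Nat.card_congr (Equiv.ofBijective (fun t => ⟨t.1.1, .cons ((hm t.1).1 t.2).2.1
    (.cons ((hm t.1).1 t.2).2.2.1 (.cons ((hm t.1).1 t.2).2.2.2.1
      (.cons ((hm t.1).1 t.2).2.2.2.2 .nil))), ?_, rfl⟩) ⟨?_, ?_⟩)
  · obtain ⟨⟨a, b, c, d⟩, h⟩ := t
    obtain ⟨⟨h1, h2⟩, h3, h4, h5, h6⟩ := (hm _).1 h
    have h3 := h3.ne
    have h4 := h4.ne
    have h5 := h5.ne
    have h6 := h6.ne
    simp only at h1 h2 h3 h4 h5 h6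
    simp [Walk.cons_isCycle_iff, h1, h2, h3, h4, h5, h6, h1.symm, h3.symm,
      h6.symm]
  · rintro ⟨⟨a, b, c, d⟩, h⟩ ⟨⟨a', b', c', d'⟩, h'⟩ heq
    simp only [Sigma.mk.injEq] at heq
    obtain ⟨rfl, heq⟩ := heq
    have := congrArg (fun p => p.1.support) (eq_of_heq heq)
    simp at this
    simp [this]
  · rintro ⟨x, p, hp, hl⟩
    match p, hp, hl with
    | .cons (v := a) h1 (.cons (v := b) h2 (.cons (v := c) h3 (.cons h4 .nil))), hp, hl =>
      refine ⟨⟨(x, a, b, c), (hm _).2 ⟨?_, h1, h2, h3, h4⟩⟩, rfl⟩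
      simp [Walk.cons_isCycle_iff] at hp
      grind

theorem cycleDensity_three (G : SimpleGraph V) :
    cycleDensity G 3 = triangleSum G / 6 / Fintype.card V := by
  rw [cycleDensity, cycleCount, natCard_cycles_three, Nat.cast_div (six_dvd_card_triangleTuples G)
    (by norm_num), card_triangleTuples, Nat.card_eq_fintype_card]
  norm_num

theorem cycleDensity_four (G : SimpleGraph V) :
    cycleDensity G 4 = fourCycleSum G / 8 / Fintype.card V := by
  rw [cycleDensity, cycleCount, natCard_cycles_four, Nat.cast_div (eight_dvd_card_fourCycleTuples G)
    (by norm_num), card_fourCycleTuples, Nat.card_eq_fintype_card]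
  norm_num

end CycleCounting

theorem finite_extremeSet (r : ℕ) : (extremeSet r).Finite := by
  refine Set.Finite.insert _ (((Set.finite_Icc 1 r).image (extremePoint r)).subset ?_)
  rintro p ⟨l, h1, h2, rfl⟩
  exact ⟨l, ⟨h1, h2⟩, rfl⟩

theorem extremePoint_one {r : ℕ} : extremePoint r 1 =
    ((r : ℝ) * (r - 1) / 6, (r : ℝ) * (r - 1) * (r - 2) / 8) := by
  rcases r with _ | r
  · simp [extremePoint]
  · simp only [extremePoint, Finset.sum_range_one, add_zero, Nat.div_one, Nat.add_sub_cancel]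
    ext
    · simp only [Nat.cast_choose_two]; push_cast; ring
    · push_cast; rw [Nat.cast_choose_two]; ring

/-- For every nonempty finite simple `r`-regular graph `G` (with `r ≥ 3`), the point
`(d₃(G), d₄(G))` lies in the convex polygon `Q^r`. -/
theorem density_pair_mem_convexHull {V : Type*} [Finite V] [Nonempty V]
    (r : ℕ) (hr : 3 ≤ r) (G : SimpleGraph V) (hG : IsRegularGraph G r) :
    (cycleDensity G 3, cycleDensity G 4) ∈ convexHull ℝ (extremeSet r) := by
  classical
  have := Fintype.ofFinite V
  have hr0 : 0 < r := by omega
  have hn : (0 : ℝ) < Fintype.card V := by exact_mod_cast Fintype.card_pos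
  set d₃ := cycleDensity G 3 with hd₃
  set d₄ := cycleDensity G 4 with hd₄
  have hT : triangleSum G = 6 * Fintype.card V * d₃ := by
    rw [hd₃, cycleDensity_three]; field_simp
  have hQ : fourCycleSum G = 8 * Fintype.card V * d₄ := by
    rw [hd₄, cycleDensity_four]; field_simp
  have h0 : 0 ≤ d₃ := by
    rw [hd₃, cycleDensity_three]
    have := triangleSum_nonneg G
    positivity
  have h1 : 6 * d₃ ≤ r * (r - 1) := by
    refine le_of_mul_le_mul_left ?_ hn
    linarith [triangleSum_le hG]
  have h2 : 8 * d₄ + 6 * d₃ ≤ r * (r - 1) ^ 2 := by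
    refine le_of_mul_le_mul_left ?_ hn
    linarith [fourCycleSum_add_triangleSum_le hG]
  by_contra hmem
  obtain ⟨f, u, hf, hu⟩ := geometric_hahn_banach_closed_point (convex_convexHull ℝ (extremeSet r))
    ((finite_extremeSet r).isClosed_convexHull ℝ) hmem
  have hf' : ∀ a b : ℝ, f (a, b) = f (1, 0) * a + f (0, 1) * b := by
    intro a b
    have : ((a, b) : ℝ × ℝ) = a • (1, 0) + b • (0, 1) := by simp
    rw [this, map_add, map_smul, map_smul, smul_eq_mul, smul_eq_mul]
    ring
  generalize f (1, 0) = α at hf'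
  generalize f (0, 1) = β at hf'
  have hP₀ := hf _ (subset_convexHull ℝ _ (Set.mem_insert _ _))
  have hP : ∀ l, 1 ≤ l → l ≤ r → f (extremePoint r l) < u := fun l hl hlr =>
    hf _ (subset_convexHull ℝ _ (Set.mem_insert_of_mem _ ⟨l, hl, hlr, rfl⟩))
  rw [hf'] at hu hP₀
  rcases le_or_gt 0 β with hβ | hβ
  · have hP₁ := hP 1 le_rfl hr0
    rw [extremePoint_one, hf'] at hP₁
    have h3 : β * (8 * d₄ + 6 * d₃) ≤ β * (r * (r - 1) ^ 2) := mul_le_mul_of_nonneg_left h2 hβ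
    rcases le_total (α - 3 / 4 * β) 0 with h | h
    · nlinarith [mul_nonneg (neg_nonneg.2 h) h0]
    · nlinarith [mul_le_mul_of_nonneg_left h1 h]
  · have hβ' : β ≠ 0 := hβ.ne
    have key := card_mul_le_of_le_balanced hr0 hG (c := 4 * u / β) (lam := -(4 * α) / (3 * β))
      fun l hl hlr => by
        have := hP l hl hlr
        rw [extremePoint, hf'] at this
        rw [div_le_iff_of_neg hβ]
        refine le_trans (le_of_eq ?_) (mul_le_mul_of_nonneg_left this.le (by norm_num : (0 : ℝ) ≤ 4))
        field_simp
        ring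
    rw [hT, hQ] at key
    have h3 : 4 * u / β ≤ 4 * d₄ - 3 * (-(4 * α) / (3 * β)) * d₃ := by
      refine le_of_mul_le_mul_left ?_ hn
      linarith
    rw [div_le_iff_of_neg hβ] at h3
    have h4 : (4 * d₄ - 3 * (-(4 * α) / (3 * β)) * d₃) * β = 4 * (α * d₃ + β * d₄) := by
      field_simp
      ring
    linarith
end

section
/- Let r ≥ 3 be an integer, let G₁ and G₂ be nonempty finite simple r-regular graphs, and let q be a rational number with 0 < q < 1. Then there exists a nonempty finite simple r-regular graph G such that (d₃(G), d₄(G)) = q·(d₃(G₁), d₄(G₁)) + (1−q)·(d₃(G₂), d₄(G₂)). -/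
open SimpleGraph

namespace SimpleGraph

section Copies

variable {U V W : Type*} {C : SimpleGraph U} {G : SimpleGraph V} {H : SimpleGraph W}

instance Copy.instFinite [Finite U] [Finite V] : Finite (Copy C G) :=
  DFunLike.finite _

/-- Postcomposition with an isomorphism identifies the copies of `C` in two isomorphic graphs. -/
def Iso.copyEquiv (e : G ≃g H) : Copy C G ≃ Copy C H where
  toFun f := e.toCopy.comp f
  invFun f := e.symm.toCopy.comp f
  left_inv f := by ext a; simp
  right_inv f := by ext a; simp

/-- Automorphisms of `C` act on the copies of `C` in `G` by precomposition with the inverse. -/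
instance Copy.mulActionAut : MulAction (C ≃g C) (Copy C G) where
  smul g f := f.comp g⁻¹.toCopy
  one_smul f := by ext a; rfl
  mul_smul g h f := by ext a; rfl

theorem Copy.aut_smul_apply (g : C ≃g C) (f : Copy C G) (a : U) : (g • f) a = f (g⁻¹ a) := rfl

theorem card_aut_dvd_card_copy : Nat.card (C ≃g C) ∣ Nat.card (Copy C G) := by
  have h : ∀ f : Copy C G, MulAction.stabilizer (C ≃g C) f = ⊥ := by
    intro f
    rw [Subgroup.eq_bot_iff_forall]
    intro g hg
    rw [MulAction.mem_stabilizer_iff] at hg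
    have h1 : g⁻¹ = 1 := by
      ext a
      apply f.injective
      have := DFunLike.congr_fun hg a
      rwa [Copy.aut_smul_apply] at this
    simpa using h1
  rw [Nat.card_congr (MulAction.selfEquivOrbitsQuotientProd h), Nat.card_prod]
  exact dvd_mul_left _ _

theorem Preconnected.isLeft_hom_sum (hC : C.Preconnected) (f : C →g G ⊕g H) (u v : U) :
    (f u).isLeft = (f v).isLeft := by
  obtain ⟨p⟩ := hC u v
  induction p with
  | nil => rfl
  | cons h _ ih =>
    rw [← ih]
    have := f.map_adj h
    revert this
    rcases f _ with a | a <;> rcases f _ with b | b <;> simp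

theorem Connected.card_copy_sum [Finite U] [Finite V] [Finite W] (hC : C.Connected) :
    Nat.card (Copy C (G ⊕g H)) = Nat.card (Copy C G) + Nat.card (Copy C H) := by
  rw [← Nat.card_sum]
  symm
  refine Nat.card_congr (Equiv.ofBijective (Sum.elim
    (fun f : Copy C G => (Embedding.sumInl (G := G) (H := H)).toCopy.comp f)
    (fun f : Copy C H => (Embedding.sumInr (G := G) (H := H)).toCopy.comp f)) ⟨?_, ?_⟩)
  · obtain ⟨u⟩ := hC.nonempty
    rintro (f | f) (g | g) h
    · congr 1
      ext a
      simpa using DFunLike.congr_fun h a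
    · simpa using DFunLike.congr_fun h u
    · simpa using DFunLike.congr_fun h u
    · congr 1
      ext a
      simpa using DFunLike.congr_fun h a
  · intro f
    obtain ⟨u⟩ := hC.nonempty
    have hu := fun v => hC.preconnected.isLeft_hom_sum f.toHom v u
    rcases hfu : f u with a | a
    · have hv : ∀ v, ∃ b, f v = Sum.inl b := fun v => by
        rw [← Sum.isLeft_iff]; simpa [hfu] using hu v
      choose g hg using hv
      refine ⟨Sum.inl ⟨⟨g, fun {x y} hxy => ?_⟩, fun x y hxy => f.injective ?_⟩, ?_⟩
      · have := f.toHom.map_adj hxy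
        simpa [hg] using this
      · simpa [hg] using hxy
      · ext v
        simp only [Sum.elim_inl, Copy.comp_apply, hg]
        rfl
    · have hv : ∀ v, ∃ b, f v = Sum.inr b := fun v => by
        rw [← Sum.isRight_iff]; simpa [hfu] using hu v
      choose g hg using hv
      refine ⟨Sum.inr ⟨⟨g, fun {x y} hxy => ?_⟩, fun x y hxy => f.injective ?_⟩, ?_⟩
      · have := f.toHom.map_adj hxy
        simpa [hg] using this
      · simpa [hg] using hxy
      · ext v
        simp only [Sum.elim_inr, Copy.comp_apply, hg]
        rfl

end Copies

section RootedCycles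

variable {V : Type*} {G : SimpleGraph V} {k n : ℕ}

theorem Walk.rooted_cycle_ext
    {p q : (x : V) × {p : G.Walk x x // p.IsCycle ∧ p.length = k}}
    (h : ∀ i ≤ k, p.2.1.getVert i = q.2.1.getVert i) : p = q := by
  obtain ⟨x, p, hp, hpk⟩ := p
  obtain ⟨y, q, hq, hqk⟩ := q
  obtain rfl : x = y := by simpa using h 0 (Nat.zero_le _)
  have : p = q := Walk.ext_getVert_le_length (hpk.trans hqk.symm) fun i hi => h i (hpk ▸ hi)
  subst this
  rfl

/-- A cycle of length `n + 3`, traversed backwards, as a copy of the cycle graph. -/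
def Walk.IsCycle.toCopy {x : V} {p : G.Walk x x} (hp : p.IsCycle) (hn : p.length = n + 3) :
    Copy (cycleGraph (n + 3)) G where
  toHom :=
    { toFun := fun i => p.getVert (n + 3 - i)
      map_rel' := by
        intro i j hij
        wlog hle : j < i generalizing i j
        · have hne := hij.ne
          exact (this hij.symm (by lia)).symm
        rcases cycleGraph_adj'.mp hij with h | h
        · rw [Fin.sub_val_of_le hle.le] at h
          have := p.adj_getVert_succ (i := n + 3 - i) (by lia)
          rwa [show n + 3 - (i : ℕ) + 1 = n + 3 - j by lia] at this
        · rw [Fin.coe_sub_iff_lt.mpr hle] at h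
          have := p.adj_getVert_succ (i := 0) (by lia)
          rw [show n + 3 - (i : ℕ) = 0 + 1 by lia, show n + 3 - (j : ℕ) = p.length by lia]
          simpa using this.symm }
  injective' := by
    intro i j hij
    have := hp.getVert_injOn (by rw [Set.mem_ofPred_eq]; lia) (by rw [Set.mem_ofPred_eq]; lia) hij
    lia

theorem Walk.IsCycle.toCopy_apply {x : V} {p : G.Walk x x} (hp : p.IsCycle)
    (hn : p.length = n + 3) (i : Fin (n + 3)) : hp.toCopy hn i = p.getVert (n + 3 - i) := rfl

variable (G n) in
theorem card_rooted_cycles_eq_card_copy :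
    Nat.card ((x : V) × {p : G.Walk x x // p.IsCycle ∧ p.length = n + 3}) =
      Nat.card (Copy (cycleGraph (n + 3)) G) := by
  symm
  refine Nat.card_congr (Equiv.ofBijective
    (fun f => ⟨_, (cycleGraph.cycle n).map f.toHom,
      (Walk.isCycle_map_iff_of_injective f.injective).mpr cycleGraph.isCycle_cycle, by simp⟩)
    ⟨?_, ?_⟩)
  · intro f g hfg
    have key : ∀ i, ((cycleGraph.cycle n).map f.toHom).getVert i =
        ((cycleGraph.cycle n).map g.toHom).getVert i := fun i =>
      congrArg (fun q : (x : V) × {p : G.Walk x x // p.IsCycle ∧ p.length = n + 3} =>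
        q.2.1.getVert i) hfg
    ext i
    have := key (n + 3 - i)
    simp only [Walk.getVert_map, Copy.toHom_apply] at this
    rw [cycleGraph.getVert_cycle (by lia)] at this
    have hi : (n + 3 - (n + 3 - (i : ℕ))) % (n + 3) = i := by
      rw [show n + 3 - (n + 3 - (i : ℕ)) = i by lia, Nat.mod_eq_of_lt i.2]
    simpa only [hi] using this
  · rintro ⟨x, p, hp, hpn⟩
    refine ⟨hp.toCopy hpn, Walk.rooted_cycle_ext fun i hi => ?_⟩
    simp only [Walk.getVert_map, Copy.toHom_apply]
    rw [cycleGraph.getVert_cycle hi, Walk.IsCycle.toCopy_apply]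
    rcases Nat.eq_zero_or_pos i with rfl | h0
    · simp [← hpn]
    · simp only [Nat.mod_eq_of_lt (show n + 3 - i < n + 3 by lia)]
      congr 1
      lia

end RootedCycles

theorem card_aut_cycleGraph_three : Nat.card (cycleGraph 3 ≃g cycleGraph 3) = 6 := by
  let e : (cycleGraph 3 ≃g cycleGraph 3) ≃ {σ : Equiv.Perm (Fin 3) //
      ∀ a b, (cycleGraph 3).Adj (σ a) (σ b) ↔ (cycleGraph 3).Adj a b} :=
    { toFun := fun f => ⟨f.toEquiv, fun _ _ => f.map_adj_iff⟩
      invFun := fun σ => ⟨σ.1, fun {_ _} => σ.2 _ _⟩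
      left_inv := fun _ => rfl
      right_inv := fun _ => rfl }
  rw [Nat.card_congr e, Nat.card_eq_fintype_card]
  decide +kernel

theorem card_aut_cycleGraph_four : Nat.card (cycleGraph 4 ≃g cycleGraph 4) = 8 := by
  let e : (cycleGraph 4 ≃g cycleGraph 4) ≃ {σ : Equiv.Perm (Fin 4) //
      ∀ a b, (cycleGraph 4).Adj (σ a) (σ b) ↔ (cycleGraph 4).Adj a b} :=
    { toFun := fun f => ⟨f.toEquiv, fun _ _ => f.map_adj_iff⟩
      invFun := fun σ => ⟨σ.1, fun {_ _} => σ.2 _ _⟩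
      left_inv := fun _ => rfl
      right_inv := fun _ => rfl }
  rw [Nat.card_congr e, Nat.card_eq_fintype_card]
  decide +kernel

end SimpleGraph

section CycleCount

variable {V W : Type*} {G : SimpleGraph V} {H : SimpleGraph W}

theorem cycleCount_add_three (G : SimpleGraph V) (n : ℕ) :
    cycleCount G (n + 3) = Nat.card (Copy (cycleGraph (n + 3)) G) / (2 * (n + 3)) := by
  rw [cycleCount, card_rooted_cycles_eq_card_copy]

theorem cycleCount_congr (e : G ≃g H) (n : ℕ) : cycleCount G (n + 3) = cycleCount H (n + 3) := by
  rw [cycleCount_add_three, cycleCount_add_three, Nat.card_congr e.copyEquiv]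

theorem cycleCount_sum [Finite V] [Finite W] {n : ℕ}
    (hn : Nat.card (cycleGraph (n + 3) ≃g cycleGraph (n + 3)) = 2 * (n + 3)) :
    cycleCount (G ⊕g H) (n + 3) = cycleCount G (n + 3) + cycleCount H (n + 3) := by
  rw [cycleCount_add_three, cycleCount_add_three, cycleCount_add_three,
    cycleGraph_connected.card_copy_sum, ← hn,
    Nat.add_div_of_dvd_right card_aut_dvd_card_copy]

theorem cycleCount_of_isEmpty [IsEmpty V] (k : ℕ) : cycleCount G k = 0 := by
  simp [cycleCount]

theorem IsRegularGraph.sum {r : ℕ} (hG : IsRegularGraph G r) (hH : IsRegularGraph H r) :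
    IsRegularGraph (G ⊕g H) r := by
  rintro (v | v)
  · rw [show (G ⊕g H).neighborSet (Sum.inl v) = Sum.inl '' G.neighborSet v by
      ext (w | w) <;> simp, Nat.card_image_of_injective Sum.inl_injective, hG v]
  · rw [show (G ⊕g H).neighborSet (Sum.inr v) = Sum.inr '' H.neighborSet v by
      ext (w | w) <;> simp, Nat.card_image_of_injective Sum.inr_injective, hH v]

theorem IsRegularGraph.congr {r : ℕ} (e : G ≃g H) (hG : IsRegularGraph G r) :
    IsRegularGraph H r := by
  intro w
  rw [← hG (e.symm w)]
  exact Nat.card_congr (e.symm.mapNeighborSet w)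

end CycleCount

/-- There is a finite `r`-regular graph with `n` vertices, `a` triangles and `b` four-cycles. -/
def HasRegularGraph (r n a b : ℕ) : Prop :=
  ∃ (V : Type) (G : SimpleGraph V), Finite V ∧ IsRegularGraph G r ∧
    Nat.card V = n ∧ cycleCount G 3 = a ∧ cycleCount G 4 = b

theorem IsRegularGraph.hasRegularGraph {V : Type*} [Finite V] {G : SimpleGraph V} {r : ℕ}
    (hG : IsRegularGraph G r) :
    HasRegularGraph r (Nat.card V) (cycleCount G 3) (cycleCount G 4) := by
  have e := Iso.map (Finite.equivFin V) G
  exact ⟨Fin (Nat.card V), _, inferInstance, hG.congr e, Nat.card_fin _,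
    (cycleCount_congr e 0).symm, (cycleCount_congr e 1).symm⟩

theorem HasRegularGraph.add {r n a b n' a' b' : ℕ} (h : HasRegularGraph r n a b)
    (h' : HasRegularGraph r n' a' b') : HasRegularGraph r (n + n') (a + a') (b + b') := by
  obtain ⟨V, G, hV, hG, rfl, rfl, rfl⟩ := h
  obtain ⟨W, H, hW, hH, rfl, rfl, rfl⟩ := h'
  exact ⟨V ⊕ W, G ⊕g H, inferInstance, hG.sum hH, Nat.card_sum,
    cycleCount_sum (n := 0) card_aut_cycleGraph_three,
    cycleCount_sum (n := 1) card_aut_cycleGraph_four⟩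

theorem HasRegularGraph.mul {r n a b : ℕ} (h : HasRegularGraph r n a b) (m : ℕ) :
    HasRegularGraph r (m * n) (m * a) (m * b) := by
  induction m with
  | zero =>
    exact ⟨Empty, ⊥, inferInstance, fun v => v.elim, by simp,
      by rw [cycleCount_of_isEmpty, zero_mul], by rw [cycleCount_of_isEmpty, zero_mul]⟩
  | succ m ih => simpa only [add_mul, one_mul] using ih.add h

/-- Rational convex combinations of points `(d₃, d₄)` realized by nonempty finite simple
`r`-regular graphs are again realized by such a graph. -/
theorem exists_regular_graph_convex_combination {V₁ V₂ : Type*}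
    [Finite V₁] [Nonempty V₁] [Finite V₂] [Nonempty V₂]
    (r : ℕ) (hr : 3 ≤ r) (G₁ : SimpleGraph V₁) (G₂ : SimpleGraph V₂)
    (h₁ : IsRegularGraph G₁ r) (h₂ : IsRegularGraph G₂ r)
    (q : ℚ) (hq0 : 0 < q) (hq1 : q < 1) :
    ∃ (V : Type) (G : SimpleGraph V), Finite V ∧ Nonempty V ∧ IsRegularGraph G r ∧
      cycleDensity G 3 = (q : ℝ) * cycleDensity G₁ 3 + (1 - (q : ℝ)) * cycleDensity G₂ 3 ∧
      cycleDensity G 4 = (q : ℝ) * cycleDensity G₁ 4 + (1 - (q : ℝ)) * cycleDensity G₂ 4 := by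
  obtain ⟨V, G, hV, hG, hn, h3, h4⟩ := (h₁.hasRegularGraph.mul (q.num.toNat * Nat.card V₂)).add
    (h₂.hasRegularGraph.mul ((q.den - q.num.toNat) * Nat.card V₁))
  have hnum : (q.num.toNat : ℤ) = q.num := Int.toNat_of_nonneg (Rat.num_nonneg.mpr hq0.le)
  have hle : q.num.toNat ≤ q.den := by
    have := Rat.num_lt_denom_iff.mpr hq1
    lia
  have hden : (q.den : ℝ) ≠ 0 := by exact_mod_cast q.den_nz
  have hq : (q : ℝ) = (q.num.toNat : ℝ) / q.den := by
    rw [Rat.cast_def, ← Int.cast_natCast q.num.toNat, hnum]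
  have hV₁ : (Nat.card V₁ : ℝ) ≠ 0 := by exact_mod_cast Nat.card_pos.ne'
  have hV₂ : (Nat.card V₂ : ℝ) ≠ 0 := by exact_mod_cast Nat.card_pos.ne'
  have hcard : (Nat.card V : ℝ) = q.den * Nat.card V₁ * Nat.card V₂ := by
    rw [hn]
    push_cast [Nat.cast_sub hle]
    ring
  have hpos : Nat.card V ≠ 0 := by
    have : (Nat.card V : ℝ) ≠ 0 := by rw [hcard]; positivity
    exact_mod_cast this
  refine ⟨V, G, hV, (Nat.card_ne_zero.mp hpos).1, hG, ?_, ?_⟩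
  · rw [cycleDensity, cycleDensity, cycleDensity, hcard, h3, hq]
    push_cast [Nat.cast_sub hle]
    field_simp
  · rw [cycleDensity, cycleDensity, cycleDensity, hcard, h4, hq]
    push_cast [Nat.cast_sub hle]
    field_simp
end
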